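/- Let d ≥ 2, let A be a matrix with the Frolov lattice properties (1°) and (2°), and let r ≥ 2 be an integer. There exist constants c(d,A,r) > 0 and C(d,A,r) > 0 such that for any V ≥ V_0 := c(d,A,r) a^{-d}, the optimized r-smooth fixed volume discrepancy of the Frolov point set satisfies D^{r,o}(F(a,A), V) ≤ C(d,A,r) a^{-rd} (log(2V/V_0))^{d-1}, where log denotes the logarithm to base 2. -/

import Mathlib

open Matrix MeasureTheory

/-!
The nodes of `F(a,A)` lie on the lattice `Λ = M ℤ^d` with `M = a⁻¹ (A⁻¹)ᵀ`, whose dual lattice is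
`a A ℤ^d`. Give every node the covolume `|det M|` of `Λ` as its weight. Since `h^r_B` vanishes off
the closed box, restricting the sum to `[0,1]^d` loses nothing, and Poisson summation
(`poisson_summation`) turns the error into the sum of the Fourier transform of `h^r_B` over the
nonzero points `a A m` of the dual lattice.

The Fourier transform of `h^r(·,u)` is the `r`-th power of that of `χ_{[-u/2,u/2)}`
(`fourier_hker`), so the term at `m` is at most `∏_j u_j^r min(1, 1/(α_j |(Am)_j|))^r` with
`α_j = a u_j` (`norm_fourier_hk1_le`). Put `T = ∏_j α_j`, which is `a^d V / r^d`; for `c = r^d` the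
condition on `V` reads `T ≥ 1`.

The sum over `m ≠ 0` is split into dyadic shells `α_j |(Am)_j| ~ 2^{s_j}` (`lattice_sum_bound`). A
shell with `k = ∑ s_j` is empty unless `2^k > T`, since `|∏_j (Am)_j| ≥ 1`; otherwise the bound on
the number of lattice points in a box gives at most a constant times `2^k / T` points, each
contributing at most a constant times `2^{-rk}`. There are at most `(k+1)^{d-1}` shells with a given
`k`, and the sum over `2^k > T` of `(k+1)^{d-1} 2^{-(r-1)k} / T` is of order
`T^{-r} (1 + log₂ T)^{d-1}`. Multiplying by `∏_j u_j^r = (T / a^d)^r` yields the claim, because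
`2V / (c / a^d) = 2T`.
-/

/-- The characteristic function `χ_{[-u/2,u/2)}`. -/
noncomputable def hk1 (u x : ℝ) : ℝ := if -(u / 2) ≤ x ∧ x < u / 2 then 1 else 0

/-- The `r`-smooth kernel: `h¹(·,u) = χ_{[-u/2,u/2)}` and `h^r(·,u) = h^{r-1}(·,u) ∗ h¹(·,u)`. -/
noncomputable def hker : ℕ → ℝ → ℝ → ℝ
  | 0, _, _ => 0
  | 1, u, x => hk1 u x
  | r + 2, u, x => ∫ y : ℝ, hker (r + 1) u (x - y) * hk1 u y

/-! ### Poisson summation on `ℤ^d` -/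

/-- A compactly supported function has, near any bounded set, only finitely many integer translates
that do not vanish. -/
theorem exists_finset_translate {d : ℕ} (g : (Fin d → ℝ) → ℂ) (hc : HasCompactSupport g) (B : ℝ) :
    ∃ S : Finset (Fin d → ℤ), ∀ x : Fin d → ℝ, ‖x‖ ≤ B → ∀ n : Fin d → ℤ,
      g (fun i => x i + n i) ≠ 0 → n ∈ S := by
  obtain ⟨R, hR⟩ := hc.isCompact.isBounded.subset_closedBall (0 : Fin d → ℝ)
  refine ⟨Finset.Icc (fun _ => -⌈R + B⌉) (fun _ => ⌈R + B⌉), fun x hx n hn => ?_⟩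
  have h := hR (subset_tsupport g (Function.mem_support.2 hn))
  rw [mem_closedBall_zero_iff] at h
  have key : ∀ i, |(n i : ℝ)| ≤ R + B := fun i => by
    have h1 : ‖x i + n i‖ ≤ R := (norm_le_pi_norm (fun i => x i + (n i : ℝ)) i).trans h
    have h2 : ‖x i‖ ≤ B := (norm_le_pi_norm x i).trans hx
    rw [Real.norm_eq_abs] at h1 h2
    rw [abs_le] at *
    constructor <;> linarith
  rw [Finset.mem_Icc]
  have hle := Int.le_ceil (R + B)
  constructor <;> intro i <;> have := abs_le.1 (key i)
  · have : ((-⌈R + B⌉ : ℤ) : ℝ) ≤ n i := by push_cast; linarith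
    exact_mod_cast this
  · have : (n i : ℝ) ≤ ⌈R + B⌉ := by linarith
    exact_mod_cast this

/-- The periodization of a continuous compactly supported function is continuous. -/
theorem continuous_periodization {d : ℕ} (g : (Fin d → ℝ) → ℂ) (hg : Continuous g)
    (hc : HasCompactSupport g) :
    Continuous fun x : Fin d → ℝ => ∑ᶠ n : Fin d → ℤ, g (fun i => x i + n i) := by
  refine continuous_finsum (fun n => by fun_prop) fun x => ?_
  obtain ⟨S, hS⟩ := exists_finset_translate g hc (‖x‖ + 1)
  refine ⟨Metric.ball x 1, Metric.ball_mem_nhds x one_pos, S.finite_toSet.subset ?_⟩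
  rintro n ⟨y, hy, hy'⟩
  refine hS y ?_ n hy
  have := norm_le_norm_add_norm_sub' y x
  rw [Metric.mem_ball, dist_eq_norm] at hy'
  linarith

/-- The character `mFourier m` of the torus, pulled back to `ℝ^d`, is invariant under integer
translations. -/
theorem mFourier_add_int {d : ℕ} (m n : Fin d → ℤ) (x : Fin d → ℝ) :
    UnitAddTorus.mFourier m (fun i => ((x i + n i : ℝ) : UnitAddCircle)) =
      UnitAddTorus.mFourier m (fun i => ((x i : ℝ) : UnitAddCircle)) := by
  congr 1
  funext i
  have : ((n i : ℝ) : UnitAddCircle) = 0 :=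
    (AddCircle.coe_eq_zero_iff (1 : ℝ)).2 ⟨n i, by simp⟩
  rw [AddCircle.coe_add, this, add_zero]

/-- Unfolding: integrating the periodization of `G` over the unit cube is integrating `G` over the
whole space. -/
theorem setIntegral_periodization {d : ℕ} (G : (Fin d → ℝ) → ℂ) (hG : Continuous G)
    (hc : HasCompactSupport G) :
    ∫ x in {x : Fin d → ℝ | ∀ i, x i ∈ Set.Ioc (0 : ℝ) (0 + 1)},
      ∑ᶠ n : Fin d → ℤ, G (fun i => x i + n i) = ∫ x, G x := by
  set Q : Set (Fin d → ℝ) := {x : Fin d → ℝ | ∀ i, x i ∈ Set.Ioc (0 : ℝ) (0 + 1)} with hQ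
  have hQm : MeasurableSet Q := MeasurableSet.univ_pi' fun i => measurableSet_Ioc
  obtain ⟨S, hS⟩ := exists_finset_translate G hc 1
  have hQ1 : ∀ x ∈ Q, ‖x‖ ≤ 1 := fun x hx => by
    rw [pi_norm_le_iff_of_nonneg zero_le_one]
    intro i
    have := hx i
    rw [Real.norm_eq_abs, abs_le]
    constructor <;> linarith [this.1, this.2]
  have hGint : ∀ n : Fin d → ℤ, Integrable fun x : Fin d → ℝ => G (fun i => x i + n i) := fun n =>
    (hG.integrable_of_hasCompactSupport hc).comp_add_right (fun i => (n i : ℝ))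
  have e1 : ∫ x in Q, ∑ᶠ n : Fin d → ℤ, G (fun i => x i + n i) =
      ∫ x in Q, ∑ n ∈ S, G (fun i => x i + n i) := by
    refine setIntegral_congr_fun hQm fun x hx => ?_
    exact finsum_eq_sum_of_support_subset _ fun n hn => hS x (hQ1 x hx) n hn
  rw [e1, integral_finsetSum _ fun n _ => (hGint n).integrableOn]
  -- The translates of the cube `Q` by the points of `ℤ^d` tile `ℝ^d`.
  let P : (Fin d → ℤ) → Set (Fin d → ℝ) := fun n => {x | (fun i => x i - n i) ∈ Q}
  have hPm : ∀ n, MeasurableSet (P n) := fun n =>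
    hQm.preimage (by fun_prop)
  have e2 : ∀ n, ∫ x in Q, G (fun i => x i + n i) = ∫ x in P n, G x := fun n => by
    have := (measurePreserving_add_right (volume : Measure (Fin d → ℝ))
      (fun i => (n i : ℝ))).setIntegral_preimage_emb
      (MeasurableEquiv.addRight (fun i => (n i : ℝ))).measurableEmbedding G (P n)
    rw [← this]
    have hpre : (fun x => x + fun i => (n i : ℝ)) ⁻¹' P n = Q := by
      ext x
      simp [P]
    rw [hpre]
    rfl
  simp_rw [e2]
  have hdisj : Pairwise (Function.onFun Disjoint P) := by
    intro n k hnk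
    refine Set.disjoint_left.2 fun x hx hx' => hnk ?_
    funext i
    have h1 := hx i
    have h2 := hx' i
    simp only [Set.mem_Ioc] at h1 h2
    have a1 : (n i : ℝ) < k i + 1 := by linarith [h1.1, h2.2]
    have a2 : (k i : ℝ) < n i + 1 := by linarith [h2.1, h1.2]
    norm_cast at a1 a2
    omega
  rw [← integral_biUnion_finset S (fun n _ => hPm n) (fun n _ k _ h => hdisj h)
    fun n _ => (hG.integrable_of_hasCompactSupport hc).integrableOn]
  refine setIntegral_eq_integral_of_forall_compl_eq_zero fun x hx => ?_
  by_contra hne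
  -- `n = ⌈x⌉ - 1` is the integer point with `x - n ∈ Q`, as `Q` is half-open on the left.
  refine hx (Set.mem_iUnion₂.2 ⟨fun i => ⌈x i⌉ - 1, ?_, ?_⟩)
  · refine hS (fun i => x i - ((⌈x i⌉ - 1 : ℤ) : ℝ)) (hQ1 _ fun i => ?_) _ ?_
    · have := Int.ceil_lt_add_one (x i)
      have := Int.le_ceil (x i)
      push_cast
      constructor <;> linarith
    · simpa using hne
  · intro i
    have := Int.ceil_lt_add_one (x i)
    have := Int.le_ceil (x i)
    push_cast
    constructor <;> linarith

open UnitAddTorus in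
/-- Poisson summation on `ℤ^d` for continuous compactly supported functions whose Fourier transform
is summable over `ℤ^d`. -/
theorem poisson_summation {d : ℕ} (g : (Fin d → ℝ) → ℂ) (hg : Continuous g)
    (hc : HasCompactSupport g)
    (hs : Summable fun m : Fin d → ℤ =>
      ∫ x : Fin d → ℝ, mFourier (-m) (fun i => ((x i : ℝ) : UnitAddCircle)) * g x) :
    ∑' n : Fin d → ℤ, g (fun i => n i) = ∑' m : Fin d → ℤ,
      ∫ x : Fin d → ℝ, mFourier (-m) (fun i => ((x i : ℝ) : UnitAddCircle)) * g x := by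
  let π : (Fin d → ℝ) → UnitAddTorus (Fin d) := fun x i => ((x i : ℝ) : UnitAddCircle)
  have hπ : IsOpenQuotientMap π :=
    IsOpenQuotientMap.piMap fun _ => QuotientAddGroup.isOpenQuotientMap_mk
  let P : (Fin d → ℝ) → ℂ := fun x => ∑ᶠ n : Fin d → ℤ, g (fun i => x i + n i)
  have hP : Continuous P := continuous_periodization g hg hc
  -- `P` takes the same value at two points with the same image in the torus.
  have hfac : ∀ x y, π x = π y → P x = P y := fun x y hxy => by
    have : ∀ i, ∃ k : ℤ, x i = y i + k := fun i => by
      have := congrFun hxy i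
      rw [← sub_eq_zero, ← AddCircle.coe_sub, AddCircle.coe_eq_zero_iff] at this
      obtain ⟨k, hk⟩ := this
      exact ⟨k, by rw [zsmul_one] at hk; linarith⟩
    choose k hk using this
    refine finsum_eq_of_bijective (fun n => k + n) (AddGroup.addLeft_bijective k) fun n => ?_
    simp only [hk, Pi.add_apply, Int.cast_add, add_assoc]
  -- The periodization, descended to the torus along a choice of preimages.
  let F : C(UnitAddTorus (Fin d), ℂ) :=
    ⟨fun t => P (hπ.surjective t).choose, by
      rw [← hπ.continuous_comp_iff]
      convert hP using 1
      funext x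
      exact hfac _ _ (hπ.surjective (π x)).choose_spec⟩
  have hF : ∀ x, F (π x) = P x := fun x => hfac _ _ (hπ.surjective (π x)).choose_spec
  have hcoef : ∀ m, mFourierCoeff F m =
      ∫ x : Fin d → ℝ, mFourier (-m) (fun i => ((x i : ℝ) : UnitAddCircle)) * g x := fun m => by
    rw [mFourierCoeff_eq_integral F m 0, ← setIntegral_periodization]
    · refine integral_congr_ae (.of_forall fun x => ?_)
      change mFourier (-m) (π x) • F (π x) = _
      rw [hF, smul_eq_mul]
      simp_rw [mFourier_add_int]
      exact mul_finsum _ _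
    · refine ((mFourier (-m)).continuous.comp hπ.continuous).mul hg
    · exact hc.mul_left
  have h := hasSum_mFourier_series_apply_of_summable (f := F)
    (by rw [funext hcoef]; exact hs) (π 0)
  rw [hF] at h
  have h1 : ∀ m : Fin d → ℤ, mFourier m (π 0) = 1 := fun m => by
    simp [mFourier, π]
  simp_rw [h1, smul_eq_mul, mul_one, hcoef] at h
  rw [h.tsum_eq]
  obtain ⟨S, hS⟩ := exists_finset_translate g hc 0
  have : P 0 = ∑ᶠ n : Fin d → ℤ, g (fun i => n i) := by simp [P]
  rw [this]
  refine tsum_eq_finsum (S.finite_toSet.subset fun n hn => hS 0 (by simp) n (by simpa using hn))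

/-! ### The kernels `h^r` -/

theorem hk1_eq_indicator (u : ℝ) : hk1 u = (Set.Ico (-(u / 2)) (u / 2)).indicator fun _ => 1 := by
  funext x
  simp [hk1, Set.indicator_apply]

theorem integrable_hk1 (u : ℝ) : Integrable (hk1 u) := by
  rw [hk1_eq_indicator]
  exact (integrable_indicator_iff measurableSet_Ico).2
    (integrableOn_const (by simp) (by simp))

/-- Convolving with `h¹` is averaging over a window of length `u`. -/
theorem hker_succ_eq_intervalIntegral (r : ℕ) {u : ℝ} (hu : 0 < u) (x : ℝ) :
    hker (r + 2) u x = ∫ t in (x - u / 2)..(x + u / 2), hker (r + 1) u t := by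
  have h : (fun y => hker (r + 1) u (x - y) * hk1 u y) =
      (Set.Ico (-(u / 2)) (u / 2)).indicator fun y => hker (r + 1) u (x - y) := by
    funext y
    by_cases hy : y ∈ Set.Ico (-(u / 2)) (u / 2) <;> simp [hk1_eq_indicator, hy]
  rw [hker, h, integral_indicator measurableSet_Ico, integral_Ico_eq_integral_Ioc,
    ← intervalIntegral.integral_of_le (by linarith),
    intervalIntegral.integral_comp_sub_left (fun t => hker (r + 1) u t) x, sub_neg_eq_add]

/-- The support of `h^r(·,u)` lies in `[-ru/2, ru/2]`; here `r` is written as `r + 1`. -/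
theorem hker_eq_zero (r : ℕ) (u : ℝ) :
    ∀ x : ℝ, (r + 1) * u / 2 < |x| → hker (r + 1) u x = 0 := by
  induction r with
  | zero =>
    intro x hx
    simp only [CharP.cast_eq_zero, zero_add, one_mul] at hx
    change hk1 u x = 0
    rw [hk1, if_neg]
    rintro ⟨h1, h2⟩
    exact absurd (abs_le.2 ⟨h1, h2.le⟩) (not_le.2 hx)
  | succ r ih =>
    intro x hx
    push_cast at hx
    rw [hker]
    refine integral_eq_zero_of_ae (.of_forall fun y => ?_)
    by_cases hy : -(u / 2) ≤ y ∧ y < u / 2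
    · have h1 : |y| ≤ u / 2 := abs_le.2 ⟨hy.1, hy.2.le⟩
      have h2 := abs_sub_abs_le_abs_sub x y
      simp only [Pi.zero_apply]
      rw [ih _ (by linarith), zero_mul]
    · simp [hk1, hy]

theorem integrable_hker (r : ℕ) (u : ℝ) : Integrable (hker (r + 1) u) := by
  induction r with
  | zero => exact integrable_hk1 u
  | succ r ih =>
    have := (integrable_hk1 u).integrable_convolution (ContinuousLinearMap.mul ℝ ℝ) ih
    refine this.congr (.of_forall fun x => ?_)
    rw [hker, convolution]
    refine integral_congr_ae (.of_forall fun y => ?_)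
    simp [mul_comm]

/-- From the second kernel on, `h^r(·,u)` is a difference of two values of a primitive of
`h^{r-1}(·,u)`, hence continuous. -/
theorem continuous_hker (r : ℕ) {u : ℝ} (hu : 0 < u) : Continuous (hker (r + 2) u) := by
  have hi : ∀ a b, IntervalIntegrable (hker (r + 1) u) volume a b := fun a b =>
    (integrable_hker r u).intervalIntegrable
  have hc := intervalIntegral.continuous_primitive hi 0
  have : hker (r + 2) u = fun x => (∫ t in (0 : ℝ)..(x + u / 2), hker (r + 1) u t) -
      ∫ t in (0 : ℝ)..(x - u / 2), hker (r + 1) u t := by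
    funext x
    rw [hker_succ_eq_intervalIntegral r hu, intervalIntegral.integral_interval_sub_left (hi _ _) (hi _ _)]
  rw [this]
  exact (hc.comp (by fun_prop)).sub (hc.comp (by fun_prop))

open FourierTransform in
theorem fourier_hker (r : ℕ) (u : ℝ) (ξ : ℝ) :
    𝓕 (fun x => (hker (r + 1) u x : ℂ)) ξ = 𝓕 (fun x => (hk1 u x : ℂ)) ξ ^ (r + 1) := by
  induction r with
  | zero => rw [zero_add, pow_one]; rfl
  | succ r ih =>
    rw [pow_succ', ← ih]
    refine Eq.trans ?_ (Real.fourier_mul_convolution_eq (f₁ := fun x => (hk1 u x : ℂ))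
      (f₂ := fun x => (hker (r + 1) u x : ℂ)) (integrable_hk1 u).ofReal
      (integrable_hker r u).ofReal ξ)
    refine congrArg (fun f : ℝ → ℂ => 𝓕 f ξ) ?_
    funext x
    rw [hker, ← integral_complex_ofReal, convolution]
    refine integral_congr_ae (.of_forall fun y => ?_)
    simp [mul_comm]

open FourierTransform in
/-- The Fourier transform `sin(π u ξ) / (π ξ)` of `χ_{[-u/2,u/2)}` is at most `u` (its `L¹` norm)
and at most `1 / |ξ|`. -/
theorem norm_fourier_hk1_le {u : ℝ} (hu : 0 < u) {ξ : ℝ} (hξ : ξ ≠ 0) :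
    ‖𝓕 (fun x => (hk1 u x : ℂ)) ξ‖ ≤ u * min 1 (1 / (u * |ξ|)) := by
  have e : 𝓕 (fun x => (hk1 u x : ℂ)) ξ =
      ∫ x in (-(u / 2))..(u / 2), Complex.exp ((-2 * Real.pi * ξ : ℝ) * Complex.I * x) := by
    rw [Real.fourier_real_eq_integral_exp_smul, intervalIntegral.integral_of_le (by linarith),
      ← integral_Ico_eq_integral_Ioc, ← integral_indicator measurableSet_Ico]
    congr 1
    funext x
    by_cases hx : x ∈ Set.Ico (-(u / 2)) (u / 2)
    · simp only [hk1_eq_indicator, hx, Set.indicator_of_mem, Complex.ofReal_one, smul_eq_mul,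
        mul_one]
      congr 1
      push_cast
      ring
    · simp [hk1_eq_indicator, hx]
  have hn : ∀ x : ℝ, ‖Complex.exp ((-2 * Real.pi * ξ : ℝ) * Complex.I * x)‖ = 1 := fun x => by
    rw [show ((-2 * Real.pi * ξ : ℝ) : ℂ) * Complex.I * x =
      ((-2 * Real.pi * ξ * x : ℝ) : ℂ) * Complex.I by push_cast; ring]
    exact Complex.norm_exp_ofReal_mul_I _
  have hξ' : 0 < |ξ| := abs_pos.2 hξ
  rw [e, mul_min_of_nonneg _ _ hu.le, le_min_iff]
  constructor
  · refine (intervalIntegral.norm_integral_le_of_norm_le_const fun x _ => (hn x).le).trans ?_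
    rw [sub_neg_eq_add, add_halves, abs_of_pos hu, one_mul, mul_one]
  · have hc : ((-2 * Real.pi * ξ : ℝ) : ℂ) * Complex.I ≠ 0 := by
      simp [Real.pi_ne_zero, hξ]
    rw [integral_exp_mul_complex hc, norm_div]
    have h2 : ‖((-2 * Real.pi * ξ : ℝ) : ℂ) * Complex.I‖ = 2 * Real.pi * |ξ| := by
      rw [norm_mul, Complex.norm_I, mul_one, Complex.norm_real, Real.norm_eq_abs, abs_mul, abs_mul,
        abs_neg, abs_two, abs_of_pos Real.pi_pos]
    rw [h2]
    have h3 : ‖Complex.exp ((-2 * Real.pi * ξ : ℝ) * Complex.I * (u / 2 : ℝ)) -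
        Complex.exp ((-2 * Real.pi * ξ : ℝ) * Complex.I * (-(u / 2) : ℝ))‖ ≤ 2 := by
      refine (norm_sub_le _ _).trans ?_
      rw [hn, hn]
      norm_num
    rw [show u * (1 / (u * |ξ|)) = 1 / |ξ| by field_simp, div_le_div_iff₀ (by positivity) hξ']
    nlinarith [Real.pi_gt_three]

/-! ### Dyadic counting of lattice points -/

/-- For `t ≥ 0`, the least `s : ℕ` with `t < 2 ^ s`. -/
noncomputable def dyadicLevel (t : ℝ) : ℕ := Nat.size ⌊t⌋₊

theorem lt_two_pow_dyadicLevel (t : ℝ) : t < 2 ^ dyadicLevel t := by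
  have h : ⌊t⌋₊ < 2 ^ dyadicLevel t := Nat.lt_size_self _
  have := (Nat.floor_lt' (by positivity)).1 h
  exact_mod_cast this

theorem min_one_inv_le_dyadicLevel {t : ℝ} (ht : 0 ≤ t) :
    min 1 (1 / t) ≤ 2 * (1 / 2) ^ dyadicLevel t := by
  rcases h : dyadicLevel t with _ | s
  · rw [pow_zero]
    exact (min_le_left _ _).trans (by norm_num)
  · have h1 : s < Nat.size ⌊t⌋₊ := by
      change s < dyadicLevel t
      omega
    have h2 : ((2 ^ s : ℕ) : ℝ) ≤ t := (Nat.cast_le.2 (Nat.lt_size.1 h1)).trans (Nat.floor_le ht)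
    push_cast at h2
    refine (min_le_right _ _).trans ((one_div_le_one_div_of_le (by positivity) h2).trans (le_of_eq ?_))
    rw [pow_succ, _root_.one_div_pow]
    ring

/-- A composition of `k` into `e + 1` parts is determined by its last `e` parts. -/
theorem card_compositions_le (e k : ℕ) (t : Finset (Fin (e + 1) → ℕ)) (ht : ∀ s ∈ t, ∑ j, s j = k) :
    t.card ≤ (k + 1) ^ e := by
  have : (Fintype.piFinset fun _ : Fin e => Finset.range (k + 1)).card = (k + 1) ^ e := by simp
  rw [← this]
  refine Finset.card_le_card_of_injOn (fun s j => s j.succ) (fun s hs => ?_) fun s hs s' hs' h => ?_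
  · simp only [Finset.mem_coe, Fintype.mem_piFinset, Finset.mem_range]
    intro j
    have := Finset.single_le_sum (f := s) (fun _ _ => Nat.zero_le _) (Finset.mem_univ j.succ)
    rw [ht s hs] at this
    omega
  · have h' : ∀ j : Fin e, s j.succ = s' j.succ := fun j => congrFun h j
    have h1 := ht s hs
    have h2 := ht s' hs'
    rw [Fin.sum_univ_succ] at h1 h2
    simp_rw [h'] at h1
    funext j
    refine Fin.cases ?_ h' j
    omega

/-- The tail of `∑ (k + 1) ^ e 2 ^ (-k)` beyond `log₂ T` is at most a constant times its
first term. -/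
theorem dyadic_tail_bound (e : ℕ) : ∃ K : ℝ, 0 < K ∧ ∀ T : ℝ, 1 ≤ T → ∀ U : Finset ℕ,
    (∀ k ∈ U, T < 2 ^ k) →
    ∑ k ∈ U, ((k : ℝ) + 1) ^ e * (1 / 2) ^ k ≤ K * T⁻¹ * (1 + Real.logb 2 T) ^ e := by
  let φ : ℕ → ℝ := fun j => ((j : ℝ) + 1) ^ e * (1 / 2) ^ j
  have hφ0 : ∀ j, 0 ≤ φ j := fun j => by positivity
  have hφ : Summable φ := by
    have h := (summable_nat_add_iff 1).2
      (summable_pow_mul_geometric_of_norm_lt_one e (r := (1 / 2 : ℝ)) (by norm_num))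
    refine (h.mul_left 2).congr fun j => ?_
    simp only [φ]
    push_cast
    ring
  have hpos : 0 < ∑' j, φ j := hφ.tsum_pos hφ0 0 (by simp [φ])
  refine ⟨2 * ∑' j, φ j, by positivity, fun T hT U hU => ?_⟩
  have hT0 : 0 < T := by linarith
  have hlog : 0 ≤ Real.logb 2 T := Real.logb_nonneg (by norm_num) hT
  set k0 := ⌊Real.logb 2 T⌋₊ with hk0
  have hk0le : (k0 : ℝ) ≤ Real.logb 2 T := Nat.floor_le hlog
  have hTlt : T < 2 ^ (k0 + 1) := by
    have := (Real.logb_lt_iff_lt_rpow (by norm_num) hT0).1 (Nat.lt_floor_add_one (Real.logb 2 T))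
    exact_mod_cast this
  have hge : ∀ k ∈ U, k0 ≤ k := fun k hk => by
    have h1 := (Real.logb_lt_iff_lt_rpow (b := 2) (y := k) (by norm_num) hT0).2
      (by exact_mod_cast hU k hk)
    have : (k0 : ℝ) < k := by linarith
    exact_mod_cast this.le
  have hterm : ∀ k ∈ U, ((k : ℝ) + 1) ^ e * (1 / 2) ^ k ≤
      ((1 + Real.logb 2 T) ^ e * (2 * T⁻¹)) * φ (k - k0) := fun k hk => by
    obtain ⟨j, rfl⟩ := Nat.exists_eq_add_of_le (hge k hk)
    have a1 : (((k0 + j : ℕ) : ℝ) + 1) ^ e ≤ (1 + Real.logb 2 T) ^ e * ((j : ℝ) + 1) ^ e := by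
      rw [← mul_pow]
      refine pow_le_pow_left₀ (by positivity) ?_ e
      push_cast
      nlinarith [(Nat.cast_nonneg j : (0 : ℝ) ≤ j)]
    have a2 : (1 / 2 : ℝ) ^ k0 ≤ 2 * T⁻¹ := by
      rw [_root_.one_div_pow, ← div_eq_mul_inv, div_le_div_iff₀ (by positivity) hT0, one_mul, ← pow_succ']
      exact hTlt.le
    simp only [φ, Nat.add_sub_cancel_left]
    rw [pow_add]
    calc _ ≤ ((1 + Real.logb 2 T) ^ e * ((j : ℝ) + 1) ^ e) * ((2 * T⁻¹) * (1 / 2) ^ j) := by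
          gcongr
      _ = _ := by ring
  have hsum : ∑ k ∈ U, φ (k - k0) ≤ ∑' j, φ j := by
    rw [← Finset.sum_image (f := φ) (g := fun k => k - k0) fun a ha b hb h => by
      have := hge a ha
      have := hge b hb
      simp only at h
      omega]
    exact hφ.sum_le_tsum _ fun j _ => hφ0 j
  calc _ ≤ ∑ k ∈ U, ((1 + Real.logb 2 T) ^ e * (2 * T⁻¹)) * φ (k - k0) := Finset.sum_le_sum hterm
    _ = ((1 + Real.logb 2 T) ^ e * (2 * T⁻¹)) * ∑ k ∈ U, φ (k - k0) := by rw [Finset.mul_sum]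
    _ ≤ ((1 + Real.logb 2 T) ^ e * (2 * T⁻¹)) * ∑' j, φ j := by gcongr
    _ = _ := by ring

/-- The dual lattice sum, with `r = q + 2`. In the dyadic shells of the coordinates `α_j |(Am)_j|`,
the lower bound `h1` on the product of the coordinates forces `2 ^ k > T = ∏ α_j` for every occupied
shell of total level `k`, and the counting hypothesis `h2` then allows it only a constant times
`2 ^ k / T` points. -/
theorem lattice_sum_bound (e q : ℕ) (A : Matrix (Fin (e + 1)) (Fin (e + 1)) ℝ)
    (h1 : ∀ m : Fin (e + 1) → ℤ, m ≠ 0 → 1 ≤ |∏ j, A.mulVec (fun i => (m i : ℝ)) j|)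
    (h2 : ∀ x y : Fin (e + 1) → ℝ, (∀ j, x j ≤ y j) →
      {m : Fin (e + 1) → ℤ | ∀ j, A.mulVec (fun i => (m i : ℝ)) j ∈ Set.Icc (x j) (y j)}.Finite ∧
      ({m : Fin (e + 1) → ℤ |
        ∀ j, A.mulVec (fun i => (m i : ℝ)) j ∈ Set.Icc (x j) (y j)}.ncard : ℝ)
        ≤ ∏ j, (y j - x j) + 1) :
    ∃ K : ℝ, 0 < K ∧ ∀ α : Fin (e + 1) → ℝ, (∀ j, 0 < α j) → 1 ≤ ∏ j, α j →
      ∀ S : Finset (Fin (e + 1) → ℤ), 0 ∉ S →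
      ∑ m ∈ S, ∏ j, (min 1 (1 / (α j * |A.mulVec (fun i => (m i : ℝ)) j|))) ^ (q + 2) ≤
        K * ((∏ j, α j) ^ (q + 2))⁻¹ * (1 + Real.logb 2 (∏ j, α j)) ^ e := by
  classical
  obtain ⟨K, hK, hKb⟩ := dyadic_tail_bound e
  set C₁ : ℝ := (2 ^ (e + 1) + 1) * (2 ^ (e + 1)) ^ (q + 2) with hC₁
  have hC₁pos : 0 < C₁ := by positivity
  refine ⟨C₁ * K, by positivity, fun α hα hT S hS => ?_⟩
  set T := ∏ j, α j with hTdef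
  have hT0 : 0 < T := by linarith
  let ν : (Fin (e + 1) → ℤ) → Fin (e + 1) → ℝ := fun m => A.mulVec (fun i => (m i : ℝ))
  let s : (Fin (e + 1) → ℤ) → Fin (e + 1) → ℕ := fun m j => dyadicLevel (α j * |ν m j|)
  let lev : (Fin (e + 1) → ℤ) → ℕ := fun m => ∑ j, s m j
  have ht0 : ∀ m j, 0 ≤ α j * |ν m j| := fun m j => mul_nonneg (hα j).le (abs_nonneg _)
  have hlev : ∀ m ∈ S, T < 2 ^ lev m := fun m hm => by
    have hm0 : m ≠ 0 := fun h => hS (h ▸ hm)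
    calc T ≤ ∏ j, (α j * |ν m j|) := by
          rw [Finset.prod_mul_distrib, ← Finset.abs_prod]
          exact le_mul_of_one_le_right hT0.le (h1 m hm0)
      _ < ∏ j, (2 : ℝ) ^ s m j := by
          have hprod : 0 < ∏ j, (α j * |ν m j|) := by
            rw [Finset.prod_mul_distrib, ← Finset.abs_prod]
            exact mul_pos hT0 (by linarith [h1 m hm0])
          refine Finset.prod_lt_prod_of_nonempty (fun j _ => ?_)
            (fun j _ => lt_two_pow_dyadicLevel _) Finset.univ_nonempty
          refine lt_of_le_of_ne (ht0 m j) fun h => hprod.ne' ?_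
          exact Finset.prod_eq_zero (Finset.mem_univ j) h.symm
      _ = 2 ^ lev m := Finset.prod_pow_eq_pow_sum _ _ _
  have hterm : ∀ m, ∏ j, (min 1 (1 / (α j * |ν m j|))) ^ (q + 2) ≤
      (2 ^ (e + 1) * (1 / 2) ^ lev m) ^ (q + 2) := fun m => by
    rw [Finset.prod_pow]
    have hnn : ∀ j, 0 ≤ min 1 (1 / (α j * |ν m j|)) := fun j =>
      le_min zero_le_one (one_div_nonneg.2 (ht0 m j))
    refine pow_le_pow_left₀ (Finset.prod_nonneg fun j _ => hnn j) ?_ _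
    refine (Finset.prod_le_prod (fun j _ => hnn j)
      fun j _ => min_one_inv_le_dyadicLevel (ht0 m j)).trans (le_of_eq ?_)
    rw [Finset.prod_mul_distrib, Finset.prod_pow_eq_pow_sum]
    simp [lev, s]
  have hfib : ∀ k, T < 2 ^ k → ∀ σ : Fin (e + 1) → ℕ, ∑ j, σ j = k →
      (((S.filter fun m => lev m = k).filter fun m => s m = σ).card : ℝ) ≤
        (2 ^ (e + 1) + 1) * (2 ^ k * T⁻¹) := fun k hk σ hσ => by
    obtain ⟨hfin, hcard⟩ := h2 (fun j => -(2 ^ σ j / α j)) (fun j => 2 ^ σ j / α j) fun j => by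
      have := hα j
      have : 0 < 2 ^ σ j / α j := by positivity
      linarith
    have hsub : (((S.filter fun m => lev m = k).filter fun m => s m = σ : Finset _) : Set _) ⊆
        {m : Fin (e + 1) → ℤ | ∀ j, A.mulVec (fun i => (m i : ℝ)) j ∈
          Set.Icc (-(2 ^ σ j / α j)) (2 ^ σ j / α j)} := fun m hm j => by
      simp only [Finset.coe_filter, Finset.mem_filter, Set.mem_ofPred_eq] at hm
      rw [Set.mem_Icc, ← abs_le, le_div_iff₀ (hα j), ← hm.2, mul_comm]
      exact (lt_two_pow_dyadicLevel _).le
    have hle := Set.ncard_le_ncard hsub hfin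
    rw [Set.ncard_coe_finset] at hle
    refine (Nat.cast_le.2 hle).trans (hcard.trans ?_)
    have hvol : ∏ j, (2 ^ σ j / α j - -(2 ^ σ j / α j)) = 2 ^ (e + 1) * (2 ^ k * T⁻¹) := by
      simp_rw [sub_neg_eq_add, ← two_mul]
      rw [Finset.prod_mul_distrib, Finset.prod_div_distrib, Finset.prod_pow_eq_pow_sum, hσ]
      simp [div_eq_mul_inv, hTdef]
    rw [hvol, add_mul, one_mul]
    have : 1 ≤ 2 ^ k * T⁻¹ := by
      rw [← div_eq_mul_inv, one_le_div hT0]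
      exact hk.le
    linarith
  have hlevel : ∀ k ∈ S.image lev,
      ∑ m ∈ S with lev m = k, ∏ j, (min 1 (1 / (α j * |ν m j|))) ^ (q + 2) ≤
        (C₁ * T⁻¹ * (T ^ q)⁻¹) * (((k : ℝ) + 1) ^ e * (1 / 2) ^ k) := fun k hk => by
    obtain ⟨m₀, hm₀, rfl⟩ := Finset.mem_image.1 hk
    have hTk := hlev m₀ hm₀
    generalize lev m₀ = k at hTk
    have hcard : ((S.filter fun m => lev m = k).card : ℝ) ≤
        ((k : ℝ) + 1) ^ e * ((2 ^ (e + 1) + 1) * (2 ^ k * T⁻¹)) := by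
      set t := (S.filter fun m => lev m = k).image s with ht
      have htk : ∀ σ ∈ t, ∑ j, σ j = k := fun σ hσ => by
        obtain ⟨m, hm, rfl⟩ := Finset.mem_image.1 hσ
        exact (Finset.mem_filter.1 hm).2
      rw [Finset.card_eq_sum_card_fiberwise (f := s) (t := t)
        fun m hm => Finset.mem_image_of_mem s hm]
      push_cast
      refine (Finset.sum_le_sum fun σ hσ => hfib k hTk σ (htk σ hσ)).trans ?_
      rw [Finset.sum_const, nsmul_eq_mul]
      have := card_compositions_le e k t htk
      have : (t.card : ℝ) ≤ ((k : ℝ) + 1) ^ e := by exact_mod_cast this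
      gcongr
    have hpowT : ((1 / 2 : ℝ) ^ k) ^ q ≤ (T ^ q)⁻¹ := by
      rw [← inv_pow]
      refine pow_le_pow_left₀ (by positivity) ?_ q
      rw [one_div, inv_pow]
      exact inv_anti₀ hT0 hTk.le
    have h2k : (2 : ℝ) ^ k * (1 / 2) ^ k = 1 := by rw [← mul_pow]; norm_num
    calc _ ≤ ∑ m ∈ S with lev m = k, ((2 : ℝ) ^ (e + 1) * (1 / 2) ^ k) ^ (q + 2) :=
          Finset.sum_le_sum fun m hm => by
            have := hterm m
            rwa [(Finset.mem_filter.1 hm).2] at this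
      _ = ((S.filter fun m => lev m = k).card : ℝ) *
            ((2 : ℝ) ^ (e + 1) * (1 / 2) ^ k) ^ (q + 2) := by rw [Finset.sum_const, nsmul_eq_mul]
      _ ≤ (((k : ℝ) + 1) ^ e * ((2 ^ (e + 1) + 1) * (2 ^ k * T⁻¹))) *
            ((2 : ℝ) ^ (e + 1) * (1 / 2) ^ k) ^ (q + 2) := by gcongr
      _ = (C₁ * T⁻¹ * ((1 / 2 : ℝ) ^ k) ^ q) * (((k : ℝ) + 1) ^ e * (1 / 2) ^ k) *
            ((2 : ℝ) ^ k * (1 / 2) ^ k) := by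
          rw [hC₁]
          generalize (2 : ℝ) ^ (e + 1) = X
          generalize (1 / 2 : ℝ) ^ k = Y
          generalize (2 : ℝ) ^ k = Z
          ring
      _ ≤ _ := by
          rw [h2k, mul_one]
          gcongr
  rw [← Finset.sum_fiberwise_of_maps_to (s := S) (t := S.image lev) (g := lev)
    fun m hm => Finset.mem_image_of_mem lev hm]
  refine (Finset.sum_le_sum hlevel).trans ?_
  rw [← Finset.mul_sum]
  refine (mul_le_mul_of_nonneg_left (hKb T hT _ fun k hk => ?_) (by positivity)).trans
    (le_of_eq ?_)
  · obtain ⟨m, hm, rfl⟩ := Finset.mem_image.1 hk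
    exact hlev m hm
  · rw [pow_add T q 2, mul_inv, sq T, mul_inv]
    ring

/-! ### Assembling the estimate -/

/-- Pairing with an integer frequency `m` in the original coordinates is pairing with the dual
lattice point `a A m` in the coordinates `y = a⁻¹ (A⁻¹)ᵀ x`. -/
theorem dual_pairing {d : ℕ} (A : Matrix (Fin d) (Fin d) ℝ) (hA : IsUnit A.det) {a : ℝ}
    (ha : a ≠ 0) (m x : Fin d → ℝ) :
    ∑ j, m j * x j = ∑ j, (a * A.mulVec m j) * (a⁻¹ • (A⁻¹)ᵀ).mulVec x j := by
  have h : m ⬝ᵥ x = A.mulVec m ⬝ᵥ (A⁻¹)ᵀ.mulVec x := by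
    rw [Matrix.mulVec_transpose, dotProduct_comm (A.mulVec m), ← Matrix.dotProduct_mulVec,
      Matrix.mulVec_mulVec, Matrix.nonsing_inv_mul _ hA, Matrix.one_mulVec, dotProduct_comm]
  change m ⬝ᵥ x = _
  rw [h]
  refine Finset.sum_congr rfl fun j _ => ?_
  rw [Matrix.smul_mulVec, Pi.smul_apply, smul_eq_mul]
  field_simp

/-- In the coordinates `y = a⁻¹ (A⁻¹)ᵀ x` the character of frequency `-m` splits into a product of
one-dimensional characters with frequencies `a (A m)_j`. -/
theorem mFourier_neg_eq_prod {d : ℕ} (A : Matrix (Fin d) (Fin d) ℝ) (hA : IsUnit A.det) {a : ℝ}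
    (ha : a ≠ 0) (m : Fin d → ℤ) (x : Fin d → ℝ) :
    UnitAddTorus.mFourier (-m) (fun i => ((x i : ℝ) : UnitAddCircle)) =
      ∏ j, Complex.exp ((-2 * Real.pi * (a⁻¹ • (A⁻¹)ᵀ).mulVec x j *
        (a * A.mulVec (fun i => (m i : ℝ)) j) : ℝ) * Complex.I) := by
  have h := dual_pairing A hA ha (fun i => (m i : ℝ)) x
  simp only [UnitAddTorus.mFourier, ContinuousMap.coe_mk, fourier_coe_apply]
  rw [← Complex.exp_sum, ← Complex.exp_sum, ← Finset.sum_mul, ← Complex.ofReal_sum]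
  congr 1
  have h' : ∑ j, (-2 * Real.pi * (a⁻¹ • (A⁻¹)ᵀ).mulVec x j *
      (a * A.mulVec (fun i => (m i : ℝ)) j)) = -2 * Real.pi * ∑ j, (m j : ℝ) * x j := by
    rw [h, Finset.mul_sum]
    exact Finset.sum_congr rfl fun j _ => by ring
  rw [h', Finset.mul_sum, Complex.ofReal_sum, Finset.sum_mul]
  refine Finset.sum_congr rfl fun j _ => ?_
  simp only [Pi.neg_apply]
  push_cast
  ring

theorem integral_comp_mulVec {d : ℕ} {M : Matrix (Fin d) (Fin d) ℝ} (hM : M.det ≠ 0)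
    {H : (Fin d → ℝ) → ℂ} (hH : Continuous H) :
    ∫ x, H (M.mulVec x) = (|M.det|⁻¹ : ℝ) * ∫ y, H y := by
  have hm : Measurable (Matrix.toLin' M) :=
    (LinearMap.continuous_of_finiteDimensional _).measurable
  have h := integral_map (μ := volume) hm.aemeasurable hH.aestronglyMeasurable
  rw [Real.map_matrix_volume_pi_eq_smul_volume_pi hM, integral_smul_measure,
    ENNReal.toReal_ofReal (abs_nonneg _), abs_inv] at h
  rw [← Complex.real_smul, h]
  simp

/-- The one-dimensional factor of the Fourier transform of `h^r_B`, with `r = q + 2`: the translation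
by `x₀` only contributes a phase. -/
theorem norm_integral_exp_mul_hker_le (q : ℕ) {u : ℝ} (hu : 0 < u) (x₀ : ℝ) {ξ : ℝ} (hξ : ξ ≠ 0) :
    ‖∫ y : ℝ, Complex.exp ((-2 * Real.pi * y * ξ : ℝ) * Complex.I) * (hker (q + 2) u (y - x₀) : ℂ)‖
      ≤ u ^ (q + 2) * (min 1 (1 / (u * |ξ|))) ^ (q + 2) := by
  have h : ∫ y : ℝ, Complex.exp ((-2 * Real.pi * y * ξ : ℝ) * Complex.I) *
      (hker (q + 2) u (y - x₀) : ℂ) =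
      Complex.exp ((-2 * Real.pi * x₀ * ξ : ℝ) * Complex.I) *
        FourierTransform.fourier (fun x => (hker (q + 2) u x : ℂ)) ξ := by
    rw [Real.fourier_real_eq_integral_exp_smul, ← integral_const_mul,
      ← integral_sub_right_eq_self (fun y : ℝ => Complex.exp ((-2 * Real.pi * x₀ * ξ : ℝ) *
        Complex.I) * Complex.exp ((-2 * Real.pi * y * ξ : ℝ) * Complex.I) •
          (hker (q + 2) u y : ℂ)) x₀]
    refine integral_congr_ae (.of_forall fun y => ?_)
    simp only [smul_eq_mul]
    rw [← mul_assoc, ← Complex.exp_add]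
    congr 2
    push_cast
    ring
  rw [h, norm_mul, Complex.norm_exp_ofReal_mul_I, one_mul, fourier_hker (q + 1), norm_pow,
    ← mul_pow]
  exact pow_le_pow_left₀ (norm_nonneg _) (norm_fourier_hk1_le hu hξ) _

/-- Let `d ≥ 2`, let `A` satisfy the Frolov lattice properties (1°) and (2°), and let `r ≥ 2`.
There exist `c(d,A,r) > 0` and `C(d,A,r) > 0` such that for every `a > 1` and every
`V ≥ V₀ := c(d,A,r) a^{-d}`, the optimized `r`-smooth fixed volume discrepancy of the Frolov
point set `F(a,A) = {a⁻¹(A⁻¹)ᵀ m : m ∈ ℤ^d} ∩ [0,1]^d` satisfies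
`D^{r,o}(F(a,A),V) ≤ C(d,A,r) a^{-rd} (log₂(2V/V₀))^{d-1}`: there are weights `w` on the
points of `F(a,A)` such that for every axis-parallel box
`B = ∏_j [x⁰_j - ru_j/2, x⁰_j + ru_j/2) ⊆ [0,1)^d` of volume `V` the weighted discrepancy
`|∫ h^r_B - Σ_z w(z) h^r_B(z)|` is at most the stated bound. -/
theorem frolov_optimized_r_smooth_fixed_volume_discrepancy
    (d : ℕ) (hd : 2 ≤ d) (r : ℕ) (hr : 2 ≤ r) (A : Matrix (Fin d) (Fin d) ℝ)
    (hA : IsUnit A.det)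
    (h1 : ∀ m : Fin d → ℤ, m ≠ 0 → 1 ≤ |∏ j, A.mulVec (fun i => (m i : ℝ)) j|)
    (h2 : ∀ x y : Fin d → ℝ, (∀ j, x j ≤ y j) →
      {m : Fin d → ℤ | ∀ j, A.mulVec (fun i => (m i : ℝ)) j ∈ Set.Icc (x j) (y j)}.Finite ∧
      ({m : Fin d → ℤ | ∀ j, A.mulVec (fun i => (m i : ℝ)) j ∈ Set.Icc (x j) (y j)}.ncard : ℝ)
        ≤ ∏ j, (y j - x j) + 1) :
    ∃ c C : ℝ, 0 < c ∧ 0 < C ∧ ∀ a : ℝ, 1 < a → ∀ V : ℝ, c / a ^ d ≤ V →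
      ∃ w : (Fin d → ℝ) → ℝ,
      ∀ x0 u : Fin d → ℝ, (∀ j, 0 < u j) →
      (∀ j, 0 ≤ x0 j - r * u j / 2) → (∀ j, x0 j + r * u j / 2 ≤ 1) →
      (∏ j, (r * u j)) = V →
      |(∫ x : Fin d → ℝ, ∏ j, hker r (u j) (x j - x0 j)) -
          (∑' m : Fin d → ℤ,
            if (∀ j, a⁻¹ * (A⁻¹)ᵀ.mulVec (fun i => (m i : ℝ)) j ∈ Set.Icc (0 : ℝ) 1) then
              w (fun j => a⁻¹ * (A⁻¹)ᵀ.mulVec (fun i => (m i : ℝ)) j) *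
                ∏ j, hker r (u j) (a⁻¹ * (A⁻¹)ᵀ.mulVec (fun i => (m i : ℝ)) j - x0 j)
            else 0)| ≤
        C * (a ^ (r * d))⁻¹ * Real.logb 2 (2 * V / (c / a ^ d)) ^ (d - 1) := by
  obtain ⟨e, rfl⟩ : ∃ e, d = e + 1 := ⟨d - 1, by omega⟩
  obtain ⟨q, rfl⟩ : ∃ q, r = q + 2 := ⟨r - 2, by omega⟩
  obtain ⟨K, hK, hKb⟩ := lattice_sum_bound e q A h1 h2
  have hr0 : (0 : ℝ) < ((q + 2 : ℕ) : ℝ) := by positivity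
  -- With this `c`, the condition `V ≥ c / a ^ d` says exactly that `∏ (a u_j) ≥ 1`.
  refine ⟨((q + 2 : ℕ) : ℝ) ^ (e + 1), K, by positivity, hK, fun a ha V hV => ?_⟩
  have ha0 : 0 < a := by linarith
  set M : Matrix (Fin (e + 1)) (Fin (e + 1)) ℝ := a⁻¹ • (A⁻¹)ᵀ with hMdef
  have hMv : ∀ x j, M.mulVec x j = a⁻¹ * (A⁻¹)ᵀ.mulVec x j := fun x j => by
    rw [hMdef, Matrix.smul_mulVec, Pi.smul_apply, smul_eq_mul]
  have hMdet : M.det ≠ 0 := by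
    have h : (A⁻¹).det ≠ 0 := (Matrix.isUnit_nonsing_inv_det A hA).ne_zero
    rw [hMdef, Matrix.det_smul, Matrix.det_transpose]
    exact mul_ne_zero (pow_ne_zero _ (inv_ne_zero ha0.ne')) h
  have hMpos : 0 < |M.det| := abs_pos.2 hMdet
  -- The weight of every node is the covolume of the lattice.
  refine ⟨fun _ => |M.det|, fun x0 u hu hx0 hx1 hVol => ?_⟩
  simp_rw [← hMv]
  set f : (Fin (e + 1) → ℝ) → ℝ := fun y => ∏ j, hker (q + 2) (u j) (y j - x0 j) with hf
  have hfc : Continuous f := by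
    refine continuous_finsetProd _ fun j _ => ?_
    exact (continuous_hker q (hu j)).comp (by fun_prop)
  have hfsupp : ∀ y, f y ≠ 0 → ∀ j, |y j - x0 j| ≤ ((q + 2 : ℕ) : ℝ) * u j / 2 := fun y hy j => by
    by_contra hlt
    refine hy (Finset.prod_eq_zero (Finset.mem_univ j) (hker_eq_zero (q + 1) _ _ ?_))
    push_cast at hlt ⊢
    linarith
  -- The box lies in `[0,1]^d`, so the condition on the nodes can be dropped.
  have hnode : ∀ m : Fin (e + 1) → ℤ,
      (if ∀ j, M.mulVec (fun i => (m i : ℝ)) j ∈ Set.Icc (0 : ℝ) 1 then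
        |M.det| * f (M.mulVec fun i => (m i : ℝ)) else 0) =
      |M.det| * f (M.mulVec fun i => (m i : ℝ)) := fun m => by
    split_ifs with hm
    · rfl
    · by_contra hne
      refine hm fun j => ?_
      have := abs_le.1 (hfsupp _ (right_ne_zero_of_mul (Ne.symm hne)) j)
      constructor <;> linarith [hx0 j, hx1 j]
  change |(∫ x, f x) - ∑' m : Fin (e + 1) → ℤ,
      (if ∀ j, M.mulVec (fun i => (m i : ℝ)) j ∈ Set.Icc (0 : ℝ) 1 then
        |M.det| * f (M.mulVec fun i => (m i : ℝ)) else 0)| ≤ _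
  simp_rw [hnode]
  rw [tsum_mul_left]
  set T := ∏ j, (a * u j) with hTdef
  have hT : T * ((q + 2 : ℕ) : ℝ) ^ (e + 1) = V * a ^ (e + 1) := by
    rw [← hVol, hTdef, Finset.prod_mul_distrib, Finset.prod_mul_distrib]
    simp only [Finset.prod_const, Finset.card_univ, Fintype.card_fin]
    ring
  have hTeq : T = V * a ^ (e + 1) / ((q + 2 : ℕ) : ℝ) ^ (e + 1) := by
    rw [← hT]
    field_simp
  have hT1 : 1 ≤ T := by
    rw [hTeq, one_le_div (by positivity)]
    exact (div_le_iff₀ (by positivity)).1 hV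
  have hlog : Real.logb 2 (2 * V / (((q + 2 : ℕ) : ℝ) ^ (e + 1) / a ^ (e + 1))) =
      1 + Real.logb 2 T := by
    have : 2 * V / (((q + 2 : ℕ) : ℝ) ^ (e + 1) / a ^ (e + 1)) = 2 * T := by
      rw [hTeq]
      field_simp
    rw [this, Real.logb_mul (by norm_num) (by positivity), Real.logb_self_eq_one (by norm_num)]
  rw [hlog, Nat.add_sub_cancel]
  let ν : (Fin (e + 1) → ℤ) → Fin (e + 1) → ℝ := fun m => A.mulVec (fun i => (m i : ℝ))
  let g : (Fin (e + 1) → ℝ) → ℂ := fun x => (f (M.mulVec x) : ℂ)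
  have hMc : ∀ N : Matrix (Fin (e + 1)) (Fin (e + 1)) ℝ, Continuous fun x => N.mulVec x :=
    fun N => Continuous.matrix_mulVec continuous_const continuous_id
  have hgc : Continuous g := Complex.continuous_ofReal.comp (hfc.comp (hMc M))
  have hgs : HasCompactSupport g := by
    refine HasCompactSupport.intro
      ((isCompact_Icc (a := fun j => x0 j - ((q + 2 : ℕ) : ℝ) * u j / 2)
        (b := fun j => x0 j + ((q + 2 : ℕ) : ℝ) * u j / 2)).image (hMc M⁻¹)) fun x hx => ?_
    by_contra hne
    have hne' : f (M.mulVec x) ≠ 0 := fun h => hne (by simp [g, h])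
    refine hx ⟨M.mulVec x, ⟨fun j => ?_, fun j => ?_⟩, ?_⟩
    · have := abs_le.1 (hfsupp _ hne' j)
      simp only
      linarith
    · have := abs_le.1 (hfsupp _ hne' j)
      simp only
      linarith
    · change M⁻¹.mulVec (M.mulVec x) = x
      rw [Matrix.mulVec_mulVec, Matrix.nonsing_inv_mul _ (isUnit_iff_ne_zero.2 hMdet),
        Matrix.one_mulVec]
  let coef : (Fin (e + 1) → ℤ) → ℂ := fun m => ∫ x : Fin (e + 1) → ℝ,
    UnitAddTorus.mFourier (-m) (fun i => ((x i : ℝ) : UnitAddCircle)) * g x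
  have hcoef : ∀ m, coef m = (|M.det|⁻¹ : ℝ) * ∏ j, ∫ y : ℝ,
      Complex.exp ((-2 * Real.pi * y * (a * ν m j) : ℝ) * Complex.I) *
        (hker (q + 2) (u j) (y - x0 j) : ℂ) := fun m => by
    rw [← integral_fintype_prod_volume_eq_prod
      (fun j (y : ℝ) => Complex.exp ((-2 * Real.pi * y * (a * ν m j) : ℝ) * Complex.I) *
        (hker (q + 2) (u j) (y - x0 j) : ℂ)), ← integral_comp_mulVec hMdet]
    · refine integral_congr_ae (.of_forall fun x => ?_)
      simp only [g, f]
      rw [mFourier_neg_eq_prod A hA ha0.ne', Finset.prod_mul_distrib, Complex.ofReal_prod]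
    · refine continuous_finsetProd _ fun j _ => Continuous.mul (by fun_prop) ?_
      exact Complex.continuous_ofReal.comp ((continuous_hker q (hu j)).comp (by fun_prop))
  have hbound : ∀ m, m ≠ 0 → ‖coef m‖ ≤ (|M.det|⁻¹ * ∏ j, u j ^ (q + 2)) *
      ∏ j, (min 1 (1 / ((a * u j) * |ν m j|))) ^ (q + 2) := fun m hm => by
    -- No coordinate of a nonzero lattice point vanishes, so `1 / |ν m j|` is not a junk value.
    have hν : ∀ j, ν m j ≠ 0 := fun j h0 => by
      have := h1 m hm
      rw [Finset.prod_eq_zero (Finset.mem_univ j) h0, abs_zero] at this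
      linarith
    rw [hcoef, norm_mul, Complex.norm_real, Real.norm_eq_abs, abs_of_pos (by positivity), norm_prod,
      mul_assoc, ← Finset.prod_mul_distrib]
    refine mul_le_mul_of_nonneg_left (Finset.prod_le_prod (fun j _ => norm_nonneg _) fun j _ => ?_)
      (by positivity)
    refine (norm_integral_exp_mul_hker_le q (hu j) (x0 j) (mul_ne_zero ha0.ne' (hν j))).trans
      (le_of_eq ?_)
    rw [abs_mul, abs_of_pos ha0, show u j * (a * |ν m j|) = a * u j * |ν m j| by ring]
  set B := (|M.det|⁻¹ * ∏ j, u j ^ (q + 2)) * (K * (T ^ (q + 2))⁻¹ * (1 + Real.logb 2 T) ^ e)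
    with hB
  have hu0 : 0 ≤ ∏ j, u j ^ (q + 2) := Finset.prod_nonneg fun j _ => (pow_pos (hu j) _).le
  -- The frequency `m = 0` carries the integral itself and is removed from the sum.
  have hpartial : ∀ S : Finset (Fin (e + 1) → ℤ),
      ∑ m ∈ S, ‖if m = 0 then 0 else coef m‖ ≤ B := fun S => by
    have hS : ∑ m ∈ S, ‖if m = 0 then 0 else coef m‖ = ∑ m ∈ S.erase 0, ‖coef m‖ := by
      rw [← Finset.sum_erase S (a := 0) (by simp)]
      exact Finset.sum_congr rfl fun m hm => by rw [if_neg (Finset.ne_of_mem_erase hm)]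
    rw [hS]
    refine (Finset.sum_le_sum fun m hm => hbound m (Finset.ne_of_mem_erase hm)).trans ?_
    rw [← Finset.mul_sum]
    exact mul_le_mul_of_nonneg_left (hKb (fun j => a * u j) (fun j => mul_pos ha0 (hu j)) hT1
      (S.erase 0) (Finset.notMem_erase 0 S)) (by positivity)
  have hsumE : Summable fun m => ‖if m = 0 then 0 else coef m‖ :=
    summable_of_sum_le (fun _ => norm_nonneg _) hpartial
  have hsum : Summable coef := by
    refine (hsumE.of_norm.add (hasSum_ite_eq 0 (coef 0)).summable).congr fun m => ?_
    by_cases hm : m = 0 <;> simp [hm]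
  have hpoisson := poisson_summation g hgc hgs hsum
  change _ = ∑' m, coef m at hpoisson
  rw [hsum.tsum_eq_add_tsum_ite 0] at hpoisson
  have hcoef0 : coef 0 = (|M.det|⁻¹ : ℝ) * ((∫ x, f x : ℝ) : ℂ) := by
    have := integral_comp_mulVec hMdet (Complex.continuous_ofReal.comp hfc)
    simp only [Function.comp_apply] at this
    rw [← integral_complex_ofReal, ← this]
    simp [coef, g, UnitAddTorus.mFourier_zero]
  have hg : ∑' n : Fin (e + 1) → ℤ, g (fun i => n i) =
      ((∑' n : Fin (e + 1) → ℤ, f (M.mulVec fun i => (n i : ℝ)) : ℝ) : ℂ) := by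
    rw [Complex.ofReal_tsum]
  have hdet : ((|M.det| : ℝ) : ℂ) * ((|M.det|⁻¹ : ℝ) : ℂ) = 1 := by
    rw [← Complex.ofReal_mul, mul_inv_cancel₀ hMpos.ne', Complex.ofReal_one]
  have herr : (((∫ x, f x) - |M.det| * ∑' n : Fin (e + 1) → ℤ,
      f (M.mulVec fun i => (n i : ℝ)) : ℝ) : ℂ) =
      -(((|M.det| : ℝ) : ℂ) * ∑' m, if m = 0 then 0 else coef m) := by
    rw [Complex.ofReal_sub, Complex.ofReal_mul, ← hg, hpoisson, hcoef0, mul_add, ← mul_assoc, hdet,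
      one_mul]
    ring
  rw [← Real.norm_eq_abs, ← Complex.norm_real, herr, norm_neg, norm_mul, Complex.norm_real,
    Real.norm_eq_abs, abs_abs]
  have htail : ‖∑' m, if m = 0 then 0 else coef m‖ ≤ B :=
    (norm_tsum_le_tsum_norm hsumE).trans (hsumE.tsum_le_of_sum_le hpartial)
  refine (mul_le_mul_of_nonneg_left htail hMpos.le).trans (le_of_eq ?_)
  have hTu : (T ^ (q + 2))⁻¹ * ∏ j, u j ^ (q + 2) = (a ^ ((q + 2) * (e + 1)))⁻¹ := by
    have hup : 0 < ∏ j, u j := Finset.prod_pos fun j _ => hu j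
    rw [hTdef, Finset.prod_mul_distrib, Finset.prod_pow]
    simp only [Finset.prod_const, Finset.card_univ, Fintype.card_fin]
    rw [mul_pow, ← pow_mul, mul_comm (e + 1) (q + 2)]
    field_simp
  rw [hB, ← hTu]
  field_simp
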